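/- arXiv:1805.03163 — 2 statements merged into one kernel-verified Lean document; each statement's English description precedes it below -/
import Mathlib

section
/- Let (F_i)_{i : Fin n} be a family of monotone coordinate-update maps on Fin n → Bool, let π be a permutation of Fin n, and let F_π := F_{π(n-1)} ∘ ⋯ ∘ F_{π(0)}. Let 0 ≤ k ≤ n. If X is of type S₀(π,k) and X lies in the range of F_π, then X ≤ F_π X; if X is of type S₁(π,k) and X lies in the range of F_π, then F_π X ≤ X. Consequently, if X is of type S₀(π,k) and F_π X is not comparable to X, or X is of type S₀(π,k) with F_π X < X, or X is of type S₁(π,k) with X < F_π X, then X is a Garden-of-Eden state of F_π. -/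
/-- The SDS map `F_{π(n-1)} ∘ ⋯ ∘ F_{π(1)} ∘ F_{π(0)}`: vertex `π 0` is updated first. -/
def seqComp {n : ℕ} (F : Fin n → (Fin n → Bool) → (Fin n → Bool))
    (π : Equiv.Perm (Fin n)) (X : Fin n → Bool) : Fin n → Bool :=
  (List.finRange n).foldl (fun Y i => F (π i) Y) X

/-- `X` is of type `S₀(π,k)`: the first `k` vertices in the schedule are `false`, the rest `true`. -/
def isS0 {n : ℕ} (π : Equiv.Perm (Fin n)) (k : ℕ) (X : Fin n → Bool) : Prop :=
  ∀ i : Fin n, (i.val < k → X (π i) = false) ∧ (k ≤ i.val → X (π i) = true)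

/-- `X` is of type `S₁(π,k)`: the first `k` vertices in the schedule are `true`, the rest `false`. -/
def isS1 {n : ℕ} (π : Equiv.Perm (Fin n)) (k : ℕ) (X : Fin n → Bool) : Prop :=
  ∀ i : Fin n, (i.val < k → X (π i) = true) ∧ (k ≤ i.val → X (π i) = false)

/-!
Split the update schedule after its first `k` steps, so that `F_π = H ∘ G`, and let `X = H (G Y)`
be of type `S₀`. Since `H` fixes the first `k` vertices and `X` is greatest at the others,
`G Y ≤ X`; since `G` fixes the others and `X` is least at the first `k`, `X ≤ G X`.
Monotonicity of `H` turns `G Y ≤ G X` into `X ≤ F_π X`. Type `S₁` is the order dual.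
-/

/-- A coordinate-update map at `i`: a map on states that may change only coordinate `i`. -/
def IsCoordUpdate {ι : Type*} {α : ι → Type*} (i : ι) (f : (∀ j, α j) → ∀ j, α j) : Prop :=
  ∀ (X : ∀ j, α j) (j : ι), j ≠ i → f X j = X j

/-- The SDS map of an update word, which need not visit every vertex and may revisit some;
the head of the word is updated first. -/
def wordMap {ι : Type*} {α : ι → Type*} (F : ι → (∀ j, α j) → ∀ j, α j) (l : List ι)
    (X : ∀ j, α j) : ∀ j, α j :=
  l.foldl (fun Y i => F i Y) X

/-- Type `S₀(l, k)` for an update word `l`: least values at the vertices among the first `k`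
letters, greatest values at those among the remaining letters. -/
def IsBotTop {ι : Type*} {α : ι → Type*} [∀ i, LE (α i)] (l : List ι) (k : ℕ)
    (X : ∀ i, α i) : Prop :=
  (∀ i ∈ l.take k, IsBot (X i)) ∧ ∀ i ∈ l.drop k, IsTop (X i)

/-- Type `S₁(l, k)` for an update word `l`: greatest values at the vertices among the first `k`
letters, least values at those among the remaining letters. -/
def IsTopBot {ι : Type*} {α : ι → Type*} [∀ i, LE (α i)] (l : List ι) (k : ℕ)
    (X : ∀ i, α i) : Prop :=
  (∀ i ∈ l.take k, IsTop (X i)) ∧ ∀ i ∈ l.drop k, IsBot (X i)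

section WordMap

variable {ι : Type*} {α : ι → Type*} {F : ι → (∀ j, α j) → ∀ j, α j} {l : List ι}

theorem wordMap_append (l₁ l₂ : List ι) (X : ∀ i, α i) :
    wordMap F (l₁ ++ l₂) X = wordMap F l₂ (wordMap F l₁ X) :=
  List.foldl_append

theorem wordMap_apply_of_notMem (hF : ∀ i, IsCoordUpdate i (F i)) {j : ι} (hj : j ∉ l)
    (X : ∀ i, α i) : wordMap F l X j = X j := by
  induction l generalizing X with
  | nil => rfl
  | cons a l ih =>
    obtain ⟨hja, hjl⟩ := List.ne_and_not_mem_of_not_mem_cons hj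
    exact (ih hjl (F a X)).trans (hF a X j hja)

variable [∀ i, Preorder (α i)]

theorem monotone_wordMap (hF : ∀ i ∈ l, Monotone (F i)) : Monotone (wordMap F l) := by
  induction l with
  | nil => exact monotone_id
  | cons a l ih =>
    obtain ⟨ha, hl⟩ := List.forall_mem_cons.mp hF
    exact (ih hl).comp ha

theorem le_wordMap_of_forall_mem (hF : ∀ i, IsCoordUpdate i (F i)) {X : ∀ i, α i}
    (h : ∀ i ∈ l, X i ≤ wordMap F l X i) : X ≤ wordMap F l X := fun j => by
  by_cases hj : j ∈ l
  · exact h j hj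
  · exact (wordMap_apply_of_notMem hF hj X).ge

variable {k : ℕ} {X : ∀ i, α i}

theorem IsBotTop.le_wordMap (hF : ∀ i, IsCoordUpdate i (F i))
    (hmono : ∀ i ∈ l.drop k, Monotone (F i)) (hX : IsBotTop l k X)
    (hrange : X ∈ Set.range (wordMap F l)) : X ≤ wordMap F l X := by
  obtain ⟨hbot, htop⟩ := hX
  have split (Z : ∀ i, α i) :
      wordMap F l Z = wordMap F (l.drop k) (wordMap F (l.take k) Z) := by
    rw [← wordMap_append, List.take_append_drop]
  obtain ⟨Y, hY⟩ := hrange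
  rw [split] at hY
  have mid_le : wordMap F (l.take k) Y ≤ X :=
    (le_wordMap_of_forall_mem hF fun i hi => hY ▸ htop i hi _).trans_eq hY
  have le_mid : X ≤ wordMap F (l.take k) X :=
    le_wordMap_of_forall_mem hF fun i hi => hbot i hi _
  calc
    X = wordMap F (l.drop k) (wordMap F (l.take k) Y) := hY.symm
    _ ≤ wordMap F (l.drop k) (wordMap F (l.take k) X) :=
      monotone_wordMap hmono (mid_le.trans le_mid)
    _ = wordMap F l X := (split X).symm

theorem IsTopBot.wordMap_le (hF : ∀ i, IsCoordUpdate i (F i))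
    (hmono : ∀ i ∈ l.drop k, Monotone (F i)) (hX : IsTopBot l k X)
    (hrange : X ∈ Set.range (wordMap F l)) : wordMap F l X ≤ X :=
  IsBotTop.le_wordMap (α := fun i => (α i)ᵒᵈ) hF (fun i hi _ _ h => hmono i hi h) hX hrange

end WordMap

section ListOfFn

variable {β : Type*} {n k : ℕ} {f : Fin n → β} {b : β}

theorem mem_take_ofFn : b ∈ (List.ofFn f).take k ↔ ∃ i : Fin n, i.val < k ∧ f i = b := by
  simp only [List.mem_take_iff_getElem, List.length_ofFn, List.getElem_ofFn, lt_min_iff]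
  constructor
  · rintro ⟨m, hm, rfl⟩
    exact ⟨⟨m, hm.2⟩, hm.1, rfl⟩
  · rintro ⟨i, hi, rfl⟩
    exact ⟨i, ⟨hi, i.isLt⟩, rfl⟩

theorem mem_drop_ofFn : b ∈ (List.ofFn f).drop k ↔ ∃ i : Fin n, k ≤ i.val ∧ f i = b := by
  simp only [List.mem_drop_iff_getElem, List.length_ofFn, List.getElem_ofFn]
  constructor
  · rintro ⟨m, hm, rfl⟩
    exact ⟨⟨k + m, by lia⟩, by simp, rfl⟩
  · rintro ⟨i, hi, rfl⟩
    exact ⟨i - k, by lia, by simp [hi]⟩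

end ListOfFn

section Schedule

variable {n : ℕ} (π : Equiv.Perm (Fin n)) (k : ℕ) (X : Fin n → Bool)

theorem seqComp_eq_wordMap (F : Fin n → (Fin n → Bool) → (Fin n → Bool)) :
    seqComp F π = wordMap F (List.ofFn π) := by
  funext Y
  rw [seqComp, wordMap, List.ofFn_eq_map, List.foldl_map]

theorem isS0_iff_isBotTop : isS0 π k X ↔ IsBotTop (List.ofFn π) k X := by
  simp only [isS0, IsBotTop, mem_take_ofFn, mem_drop_ofFn, isBot_iff_eq_bot,
    isTop_iff_eq_top, forall_exists_index, and_imp, forall_apply_eq_imp_iff₂, bot_eq_false,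
    top_eq_true, forall_and]

theorem isS1_iff_isTopBot : isS1 π k X ↔ IsTopBot (List.ofFn π) k X := by
  simp only [isS1, IsTopBot, mem_take_ofFn, mem_drop_ofFn, isBot_iff_eq_bot,
    isTop_iff_eq_top, forall_exists_index, and_imp, forall_apply_eq_imp_iff₂, bot_eq_false,
    top_eq_true, forall_and]

end Schedule

theorem stmt_9_general {ι : Type*} {α : ι → Type*} [∀ i, Preorder (α i)]
    {F : ι → (∀ j, α j) → ∀ j, α j} (hupd : ∀ i, IsCoordUpdate i (F i)) (l : List ι) (k : ℕ)
    (hmono : ∀ i ∈ l.drop k, Monotone (F i)) (X : ∀ i, α i) :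
    (IsBotTop l k X → X ∈ Set.range (wordMap F l) → X ≤ wordMap F l X) ∧
    (IsTopBot l k X → X ∈ Set.range (wordMap F l) → wordMap F l X ≤ X) ∧
    (IsBotTop l k X → (¬ X ≤ wordMap F l X ∧ ¬ wordMap F l X ≤ X) →
      X ∉ Set.range (wordMap F l)) ∧
    (IsBotTop l k X → wordMap F l X < X → X ∉ Set.range (wordMap F l)) ∧
    (IsTopBot l k X → X < wordMap F l X → X ∉ Set.range (wordMap F l)) :=
  ⟨IsBotTop.le_wordMap hupd hmono,
    IsTopBot.wordMap_le hupd hmono,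
    fun hX hincomp hrange => hincomp.1 (hX.le_wordMap hupd hmono hrange),
    fun hX hlt hrange => hlt.not_ge (hX.le_wordMap hupd hmono hrange),
    fun hX hlt hrange => hlt.not_ge (hX.wordMap_le hupd hmono hrange)⟩

theorem stmt_9 {n : ℕ} (F : Fin n → (Fin n → Bool) → (Fin n → Bool))
    (hupd : ∀ (i : Fin n) (X : Fin n → Bool) (j : Fin n), j ≠ i → F i X j = X j)
    (hmono : ∀ i : Fin n, Monotone (F i))
    (π : Equiv.Perm (Fin n)) (k : ℕ) (hk : k ≤ n) (X : Fin n → Bool) :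
    (isS0 π k X → X ∈ Set.range (seqComp F π) → X ≤ seqComp F π X) ∧
    (isS1 π k X → X ∈ Set.range (seqComp F π) → seqComp F π X ≤ X) ∧
    (isS0 π k X → (¬ X ≤ seqComp F π X ∧ ¬ seqComp F π X ≤ X) →
      X ∉ Set.range (seqComp F π)) ∧
    (isS0 π k X → seqComp F π X < X → X ∉ Set.range (seqComp F π)) ∧
    (isS1 π k X → X < seqComp F π X → X ∉ Set.range (seqComp F π)) := by
  rw [seqComp_eq_wordMap, isS0_iff_isBotTop, isS1_iff_isTopBot]
  exact stmt_9_general hupd _ k (fun i _ => hmono i) X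
end

section
/- Let n ≥ 2 and let (F_i)_{i : Fin n} be a family of monotone coordinate-update maps on Fin n → Bool. Then the number of pairs (X, π), where X : Fin n → Bool is a state, π is a permutation of Fin n, and X is a Garden-of-Eden state of F_π or X reaches a fixed point of F_π, is at least 2 · n · n!. Consequently, the probability that a uniformly random state is a GoE state or reaches a fixed point under a uniformly random update schedule is at least n / 2^(n−1). -/
/-- The set of "good" pairs `(X, π)`: `X` is a Garden-of-Eden state of `F_π` or
`X` reaches a fixed point of `F_π`. -/
def goodPairs {n : ℕ} (F : Fin n → (Fin n → Bool) → (Fin n → Bool)) :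
    Set ((Fin n → Bool) × Equiv.Perm (Fin n)) :=
  {p | p.1 ∉ Set.range (seqComp F p.2) ∨
    ∃ k : ℕ, seqComp F p.2 ((seqComp F p.2)^[k] p.1) = (seqComp F p.2)^[k] p.1}

/-!
Fix a schedule `π`, and let `X` be constantly `false` on an initial segment of `π` and constantly
`true` on the rest, or the other way round. If `X` lies in the range of `F_π`, then split the
composition after the initial segment: monotonicity forces `X` and `F_π X` to be comparable, so the
orbit of `X` is a monotone sequence in a finite order and reaches a fixed point. Each of the `n!`
schedules has `2n` such states.
-/

section Iterate

variable {σ : Type*} {f : σ → σ} {x : σ}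

/-- The property of `x` counted by `goodPairs`, for an arbitrary self-map `f`: either `x` is a
Garden-of-Eden state of `f` or some iterate of `x` is a fixed point of `f`. -/
def IsEdenOrEventuallyFixed (f : σ → σ) (x : σ) : Prop :=
  x ∉ Set.range f ∨ ∃ k : ℕ, Function.IsFixedPt f (f^[k] x)

variable [PartialOrder σ]

theorem exists_isFixedPt_iterate_of_map_le [WellFoundedLT σ] (hf : Monotone f)
    (hx : f x ≤ x) : ∃ k : ℕ, Function.IsFixedPt f (f^[k] x) := by
  obtain ⟨k, hk⟩ :=
    WellFoundedLT.antitone_chain_condition (hf.antitone_iterate_of_map_le hx)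
  refine ⟨k, ?_⟩
  rw [Function.IsFixedPt, ← Function.iterate_succ_apply' f]
  exact (hk (k + 1) k.le_succ).symm

theorem exists_isFixedPt_iterate_of_le_map [WellFoundedGT σ] (hf : Monotone f)
    (hx : x ≤ f x) : ∃ k : ℕ, Function.IsFixedPt f (f^[k] x) :=
  exists_isFixedPt_iterate_of_map_le (σ := σᵒᵈ) hf.dual hx

end Iterate

section Updates

variable {ι α : Type*} {F : ι → (ι → α) → ι → α} {l₁ l₂ : List ι} {X : ι → α}

/-- The composite of the maps `F i` along the word `l`, whose first letter acts first. -/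
def updateAlong (F : ι → (ι → α) → ι → α) (l : List ι) (X : ι → α) : ι → α :=
  l.foldl (fun Y i => F i Y) X

theorem updateAlong_append (F : ι → (ι → α) → ι → α) (l₁ l₂ : List ι) :
    updateAlong F (l₁ ++ l₂) = updateAlong F l₂ ∘ updateAlong F l₁ :=
  funext fun _ => List.foldl_append

theorem eqOn_updateAlong (hupd : ∀ i X, Set.EqOn (F i X) X {i}ᶜ) (l : List ι) (X : ι → α) :
    Set.EqOn (updateAlong F l X) X {i | i ∉ l} := by
  induction l generalizing X with
  | nil => exact fun _ _ => rfl
  | cons i l ih =>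
    intro j hj
    obtain ⟨hji, hjl⟩ := not_or.mp (mt List.mem_cons.mpr hj)
    exact (ih (F i X) hjl).trans (hupd i X hji)

variable [Preorder α]

theorem monotone_updateAlong (hmono : ∀ i, Monotone (F i)) (l : List ι) :
    Monotone (updateAlong F l) :=
  List.foldl_monotone hmono l

/- Write `X = H (G Y)`. On `A` the state `G Y` agrees with `X`, which is least there; off `A`
the state `G X` agrees with `X`, which is greatest there. Hence `G Y ≤ G X`; now apply `H`. -/
theorem le_map_of_mem_range_comp {G H : (ι → α) → ι → α} {A : Set ι} (hH : Monotone H)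
    (hGA : ∀ X, Set.EqOn (G X) X Aᶜ) (hHA : ∀ X, Set.EqOn (H X) X A)
    (hbot : ∀ i ∈ A, IsBot (X i)) (htop : ∀ i ∉ A, IsTop (X i))
    (hX : X ∈ Set.range (H ∘ G)) : X ≤ (H ∘ G) X := by
  obtain ⟨Y, hY⟩ := hX
  have hle : G Y ≤ G X := by
    intro i
    by_cases hi : i ∈ A
    · have hGY : X i = G Y i := by rw [← hY]; exact hHA (G Y) hi
      exact hGY ▸ hbot i hi (G X i)
    · exact hGA X hi ▸ htop i hi (G Y i)
  calc X = H (G Y) := hY.symm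
    _ ≤ H (G X) := hH hle

theorem le_updateAlong_append (hupd : ∀ i X, Set.EqOn (F i X) X {i}ᶜ)
    (hmono : ∀ i, Monotone (F i)) (hdisj : l₁.Disjoint l₂)
    (hbot : ∀ i ∈ l₁, IsBot (X i)) (htop : ∀ i ∉ l₁, IsTop (X i))
    (hX : X ∈ Set.range (updateAlong F (l₁ ++ l₂))) : X ≤ updateAlong F (l₁ ++ l₂) X := by
  rw [updateAlong_append] at hX ⊢
  exact le_map_of_mem_range_comp (A := {i | i ∈ l₁}) (monotone_updateAlong hmono l₂)
    (eqOn_updateAlong hupd l₁) (fun Y _ hi => eqOn_updateAlong hupd l₂ Y (hdisj hi)) hbot htop hX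

theorem updateAlong_append_le (hupd : ∀ i X, Set.EqOn (F i X) X {i}ᶜ)
    (hmono : ∀ i, Monotone (F i)) (hdisj : l₁.Disjoint l₂)
    (htop : ∀ i ∈ l₁, IsTop (X i)) (hbot : ∀ i ∉ l₁, IsBot (X i))
    (hX : X ∈ Set.range (updateAlong F (l₁ ++ l₂))) : updateAlong F (l₁ ++ l₂) X ≤ X :=
  le_updateAlong_append (α := αᵒᵈ) hupd (fun i => (hmono i).dual) hdisj htop hbot hX

end Updates

section Schedule

variable {ι α : Type*} {n : ℕ}

/-- The word listing `ι` in the order in which the enumeration `e` visits it. -/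
def scheduleWord (e : Fin n ≃ ι) : List ι :=
  (List.finRange n).map e

theorem nodup_scheduleWord (e : Fin n ≃ ι) : (scheduleWord e).Nodup :=
  (List.nodup_finRange n).map e.injective

theorem mem_take_scheduleWord (e : Fin n ≃ ι) (k : Fin n) (i : ι) :
    i ∈ (scheduleWord e).take (k + 1) ↔ e.symm i ≤ k := by
  have hmem (j : Fin n) : j ∈ (List.finRange n).take (k + 1) ↔ j ≤ k := by
    rw [List.mem_take_iff_idxOf_lt (List.mem_finRange j), List.idxOf_finRange, Nat.lt_succ_iff,
      Fin.le_def]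
  rw [scheduleWord, ← List.map_take, ← e.apply_symm_apply i, List.mem_map_of_injective e.injective,
    hmem, e.symm_apply_apply]

variable [PartialOrder α] [BoundedOrder α]

/-- The top element for `true`, the bottom element for `false`. -/
def extremum (α : Type*) [LE α] [BoundedOrder α] (b : Bool) : α :=
  bif b then ⊤ else ⊥

theorem extremum_injective [Nontrivial α] : Function.Injective (extremum α) := by
  intro b c h
  cases b <;> cases c <;> simp_all [extremum]

/-- The state with the extreme value `b` at the vertices `e 0, …, e k` and the opposite extreme
value at all later ones. -/
def cutState (α : Type*) [LE α] [BoundedOrder α] (e : Fin n ≃ ι) (b : Bool) (k : Fin n) :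
    ι → α :=
  fun i => extremum α (if e.symm i ≤ k then b else !b)

theorem cutState_injective [Nontrivial α] (e : Fin n ≃ ι) :
    Function.Injective fun t : Bool × Fin n => cutState α e t.1 t.2 := by
  rintro ⟨b, k⟩ ⟨c, m⟩ h
  have hval (j : Fin n) : (if j ≤ k then b else !b) = if j ≤ m then c else !c := by
    simpa only [e.symm_apply_apply] using extremum_injective (congrFun h (e j))
  have : NeZero n := ⟨k.pos.ne'⟩
  obtain rfl : b = c := by simpa using hval 0
  have hle (j : Fin n) : j ≤ k ↔ j ≤ m := by
    grind [hval j]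
  rw [eq_of_forall_le_iff hle]

theorem isEdenOrEventuallyFixed_cutState [Finite ι] [Finite α] {F : ι → (ι → α) → ι → α}
    (hupd : ∀ i X, Set.EqOn (F i X) X {i}ᶜ) (hmono : ∀ i, Monotone (F i))
    (e : Fin n ≃ ι) (b : Bool) (k : Fin n) :
    IsEdenOrEventuallyFixed (updateAlong F (scheduleWord e)) (cutState α e b k) := by
  have hf := monotone_updateAlong hmono (scheduleWord e)
  have hdisj := List.disjoint_take_drop (nodup_scheduleWord e) (le_refl (k.val + 1))
  have hsplit := List.take_append_drop (k.val + 1) (scheduleWord e)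
  have hbefore : ∀ i ∈ (scheduleWord e).take (k + 1), cutState α e b k i = extremum α b :=
    fun i hi => congrArg _ (if_pos ((mem_take_scheduleWord e k i).mp hi))
  have hafter : ∀ i ∉ (scheduleWord e).take (k + 1), cutState α e b k i = extremum α (!b) :=
    fun i hi => congrArg _ (if_neg (mt (mem_take_scheduleWord e k i).mpr hi))
  refine or_iff_not_imp_left.mpr fun hrange => ?_
  rw [not_not, ← hsplit] at hrange
  cases b with
  | false =>
    refine exists_isFixedPt_iterate_of_le_map hf (hsplit ▸ ?_)
    exact le_updateAlong_append hupd hmono hdisj (fun i hi => hbefore i hi ▸ isBot_bot)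
      (fun i hi => hafter i hi ▸ isTop_top) hrange
  | true =>
    refine exists_isFixedPt_iterate_of_map_le hf (hsplit ▸ ?_)
    exact updateAlong_append_le hupd hmono hdisj (fun i hi => hbefore i hi ▸ isTop_top)
      (fun i hi => hafter i hi ▸ isBot_bot) hrange

end Schedule

open scoped Nat in
theorem stmt_14_general {n : ℕ} {α : Type*} [PartialOrder α] [BoundedOrder α] [Nontrivial α]
    [Finite α] {F : Fin n → (Fin n → α) → Fin n → α}
    (hupd : ∀ i X, Set.EqOn (F i X) X {i}ᶜ) (hmono : ∀ i, Monotone (F i)) :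
    2 * n * n ! ≤ {p : (Fin n → α) × Equiv.Perm (Fin n) |
      IsEdenOrEventuallyFixed (updateAlong F (scheduleWord p.2)) p.1}.ncard := by
  set S := {p : (Fin n → α) × Equiv.Perm (Fin n) |
    IsEdenOrEventuallyFixed (updateAlong F (scheduleWord p.2)) p.1}
  let cutPair (t : (Bool × Fin n) × Equiv.Perm (Fin n)) : S :=
    ⟨(cutState α t.2 t.1.1 t.1.2, t.2), isEdenOrEventuallyFixed_cutState hupd hmono _ _ _⟩
  have hinj : Function.Injective cutPair := by
    rintro ⟨t, π⟩ ⟨t', π'⟩ h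
    obtain ⟨hstate, rfl⟩ := Prod.mk.inj (congrArg Subtype.val h)
    exact Prod.ext (cutState_injective π hstate) rfl
  calc 2 * n * n ! = Nat.card ((Bool × Fin n) × Equiv.Perm (Fin n)) := by
        simp [Fintype.card_perm]
    _ ≤ Nat.card S := Nat.card_le_card_of_injective cutPair hinj
    _ = S.ncard := Nat.card_coe_set_eq S

theorem goodPairs_eq {n : ℕ} (F : Fin n → (Fin n → Bool) → Fin n → Bool) :
    goodPairs F = {p | IsEdenOrEventuallyFixed (updateAlong F (scheduleWord p.2)) p.1} := by
  have hcomp (π : Equiv.Perm (Fin n)) : updateAlong F (scheduleWord π) = seqComp F π :=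
    funext fun _ => List.foldl_map
  simp only [hcomp]
  rfl

open scoped Nat in
theorem div_two_pow_pred_le_of_two_mul_mul_factorial_le {n N : ℕ} (h : 2 * n * n ! ≤ N) :
    (n : ℝ) / 2 ^ (n - 1) ≤ N / (2 ^ n * n !) := by
  have hcancel : (n : ℝ) / 2 ^ (n - 1) = (2 * n * n ! : ℕ) / (2 ^ n * n !) := by
    cases n with
    | zero => simp
    | succ m =>
      rw [Nat.add_sub_cancel, pow_succ]
      push_cast
      field_simp
  rw [hcancel]
  gcongr

theorem stmt_14 {n : ℕ} (hn : 2 ≤ n)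
    (F : Fin n → (Fin n → Bool) → (Fin n → Bool))
    (hupd : ∀ (i : Fin n) (X : Fin n → Bool) (j : Fin n), j ≠ i → F i X j = X j)
    (hmono : ∀ i : Fin n, Monotone (F i)) :
    2 * n * Nat.factorial n ≤ (goodPairs F).ncard ∧
    (n : ℝ) / 2 ^ (n - 1) ≤
      ((goodPairs F).ncard : ℝ) / (2 ^ n * Nat.factorial n) := by
  have hcount := goodPairs_eq F ▸ stmt_14_general hupd hmono
  exact ⟨hcount, div_two_pow_pred_le_of_two_mul_mul_factorial_le hcount⟩
end
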